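/- In the OSLO setup with Q nonempty, let (ξ^t, z^t, μ^t) be feasible, i.e. ξ^t_i = 1 and z^t_i = y_i for i ∈ S, and ξ^t_i ∈ (0,1), z^t_i ∈ Δ^K for i ∈ Q. Define the Proposition-1 updates applied in sequence: for i ∈ Q, ξ^{t+1}_i = σ((1/λ_ξ)·Σ_k z^t_{ik}·log p(v_i, k; μ^t)) (and ξ^{t+1}_i = 1 for i ∈ S); for i ∈ Q, z^{t+1}_{ik} = exp((ξ^{t+1}_i/λ_z)·log p(v_i, k; μ^t)) / Σ_j exp((ξ^{t+1}_i/λ_z)·log p(v_i, j; μ^t)) (and z^{t+1}_i = y_i for i ∈ S); and μ^{t+1}_k = (Σ_{i∈S∪Q} ξ^{t+1}_i·z^{t+1}_{ik}·v_i)/(Σ_{i∈S∪Q} ξ^{t+1}_i·z^{t+1}_{ik}), the denominator being positive since Q is nonempty. Then L(ξ^{t+1}, z^{t+1}, μ^{t+1}) ≥ L(ξ^t, z^t, μ^t), i.e. the block-coordinate updates of Proposition 1 never decrease the OSLO objective. -/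

import Mathlib

open scoped BigOperators

/-- Binary entropy `H_b(ξ) = −ξ·log ξ − (1−ξ)·log(1−ξ)`. -/
noncomputable def Hb (ξ : ℝ) : ℝ := -ξ * Real.log ξ - (1 - ξ) * Real.log (1 - ξ)

/-- Sigmoid `σ(x) = 1/(1+exp(−x))`. -/
noncomputable def sigmoid (x : ℝ) : ℝ := 1 / (1 + Real.exp (-x))

/-- Shannon entropy `H(z) = −Σ_k z_k·log z_k` (with the convention `0·log 0 = 0`,
which holds since `Real.log 0 = 0`). -/
noncomputable def shannonH {K : ℕ} (z : Fin K → ℝ) : ℝ := -∑ k, z k * Real.log (z k)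

/-- Gaussian parametric model: `log p(v, k; μ) = −(1/2)·‖v − μ_k‖² + c`. -/
noncomputable def logp {E : Type*} [NormedAddCommGroup E] [InnerProductSpace ℝ E]
    {K : ℕ} (c : ℝ) (v : E) (k : Fin K) (μ : Fin K → E) : ℝ :=
  -(1 / 2) * ‖v - μ k‖ ^ 2 + c

/-- The OSLO objective
`L(ξ, z, μ) = Σ_{i∈S∪Q} ξ_i·Σ_k z_{ik}·log p(v_i, k; μ) + Σ_{i∈Q} (λ_z·H(z_i) + λ_ξ·H_b(ξ_i))`. -/
noncomputable def osloL {E : Type*} [NormedAddCommGroup E] [InnerProductSpace ℝ E]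
    {ι : Type*} [DecidableEq ι] {K : ℕ} (S Q : Finset ι) (v : ι → E)
    (lamxi lamz c : ℝ) (ξ : ι → ℝ) (z : ι → Fin K → ℝ) (μ : Fin K → E) : ℝ :=
  (∑ i ∈ S ∪ Q, ξ i * ∑ k, z i k * logp c (v i) k μ) +
    ∑ i ∈ Q, (lamz * shannonH (z i) + lamxi * Hb (ξ i))

/-!
Each of the three updates exactly maximizes `osloL` over its own block. In `z i` the objective is a
linear form plus `lamz` times the Shannon entropy, which the softmax maximizes over the simplex: the
gap is `lamz` times a Kullback–Leibler divergence, nonnegative by Gibbs' inequality. In `ξ i` it is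
the same problem on two points, where the softmax becomes the sigmoid. In `μ k` it is, up to a
constant, a negative weighted sum of squared distances, which the weighted mean maximizes.
-/

section Entropy

lemma negMulLog_add_mul_log_le_sub {x q : ℝ} (hx : 0 ≤ x) (hq : 0 < q) :
    Real.negMulLog x + x * Real.log q ≤ q - x := by
  have hle := mul_le_mul_of_nonneg_left
    (Real.negMulLog_le_one_sub_self (div_nonneg hx hq.le)) hq.le
  have hmul : Real.negMulLog x = -(x * Real.log q) + q * Real.negMulLog (x / q) := by
    conv_lhs => rw [← mul_div_cancel₀ x hq.ne', Real.negMulLog_mul, Real.negMulLog]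
    field_simp
  have hcancel : q * (1 - x / q) = q - x := by field_simp
  linarith

lemma sum_negMulLog_add_sum_mul_log_nonpos {κ : Type*} {s : Finset κ} {w q : κ → ℝ}
    (hw : ∀ k ∈ s, 0 ≤ w k) (hq : ∀ k ∈ s, 0 < q k) (hqw : ∑ k ∈ s, q k ≤ ∑ k ∈ s, w k) :
    ∑ k ∈ s, Real.negMulLog (w k) + ∑ k ∈ s, w k * Real.log (q k) ≤ 0 := by
  calc ∑ k ∈ s, Real.negMulLog (w k) + ∑ k ∈ s, w k * Real.log (q k)
      = ∑ k ∈ s, (Real.negMulLog (w k) + w k * Real.log (q k)) :=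
        Finset.sum_add_distrib.symm
    _ ≤ ∑ k ∈ s, (q k - w k) :=
        Finset.sum_le_sum fun k hk => negMulLog_add_mul_log_le_sub (hw k hk) (hq k hk)
    _ ≤ 0 := by rw [Finset.sum_sub_distrib]; linarith

variable {κ : Type*} [Fintype κ]

/-- The softmax distribution (Gibbs weights) with scores `a`, the form of the `z`-update. -/
noncomputable def softmax (a : κ → ℝ) (k : κ) : ℝ := Real.exp (a k) / ∑ j, Real.exp (a j)

lemma softmax_pos (a : κ → ℝ) (k : κ) : 0 < softmax a k :=
  div_pos (Real.exp_pos _) (Finset.sum_pos (fun _ _ => Real.exp_pos _) ⟨k, Finset.mem_univ k⟩)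

lemma sum_softmax [Nonempty κ] (a : κ → ℝ) : ∑ k, softmax a k = 1 := by
  have hZ : 0 < ∑ j, Real.exp (a j) :=
    Finset.sum_pos (fun _ _ => Real.exp_pos _) Finset.univ_nonempty
  simp only [softmax, ← Finset.sum_div, div_self hZ.ne']

lemma log_softmax (a : κ → ℝ) (k : κ) :
    Real.log (softmax a k) = a k - Real.log (∑ j, Real.exp (a j)) := by
  have hZ : 0 < ∑ j, Real.exp (a j) :=
    Finset.sum_pos (fun _ _ => Real.exp_pos _) ⟨k, Finset.mem_univ k⟩
  rw [softmax, Real.log_div (Real.exp_ne_zero _) hZ.ne', Real.log_exp]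

lemma sum_mul_eq_sum_mul_log_softmax_add (a : κ → ℝ) {w : κ → ℝ} (hw : ∑ k, w k = 1) :
    ∑ k, w k * a k =
      ∑ k, w k * Real.log (softmax a k) + Real.log (∑ j, Real.exp (a j)) := by
  simp only [log_softmax, mul_sub, Finset.sum_sub_distrib, ← Finset.sum_mul, hw, one_mul,
    sub_add_cancel]

lemma isMaxOn_softmax (a : κ → ℝ) :
    IsMaxOn (fun w => ∑ k, w k * a k + ∑ k, Real.negMulLog (w k)) (stdSimplex ℝ κ)
      (softmax a) := by
  intro w hw
  have : Nonempty κ := Finset.univ_nonempty_iff.1 <|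
    Finset.nonempty_of_sum_ne_zero (hw.2.trans_ne one_ne_zero)
  have hgibbs : ∑ k, Real.negMulLog (w k) + ∑ k, w k * Real.log (softmax a k) ≤ 0 :=
    sum_negMulLog_add_sum_mul_log_nonpos (fun k _ => hw.1 k) (fun k _ => softmax_pos a k)
      ((sum_softmax a).trans hw.2.symm).le
  have hself : ∑ k, Real.negMulLog (softmax a k) =
      -∑ k, softmax a k * Real.log (softmax a k) := by
    simp only [Real.negMulLog, neg_mul, Finset.sum_neg_distrib]
  simp only [Set.mem_ofPred_eq]
  rw [sum_mul_eq_sum_mul_log_softmax_add a hw.2,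
    sum_mul_eq_sum_mul_log_softmax_add a (sum_softmax a)]
  linarith

lemma isMaxOn_softmax_div (a : κ → ℝ) {τ : ℝ} (hτ : 0 < τ) :
    IsMaxOn (fun w => ∑ k, w k * a k + τ * ∑ k, Real.negMulLog (w k)) (stdSimplex ℝ κ)
      (softmax fun k => a k / τ) := by
  have hscale (w : κ → ℝ) : ∑ k, w k * a k + τ * ∑ k, Real.negMulLog (w k) =
      τ * (∑ k, w k * (a k / τ) + ∑ k, Real.negMulLog (w k)) := by
    simp only [← mul_div_assoc, ← Finset.sum_div]
    field_simp
  intro w hw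
  simp only [Set.mem_ofPred_eq, hscale]
  exact mul_le_mul_of_nonneg_left (isMaxOn_softmax _ hw) hτ.le

lemma softmax_pair_zero (a : ℝ) :
    softmax ![a, 0] = ![Real.sigmoid a, 1 - Real.sigmoid a] := by
  ext k
  rw [← Real.sigmoid_neg]
  fin_cases k
  · have hcancel : Real.exp a / (Real.exp a + 1) = (1 + (Real.exp a)⁻¹)⁻¹ := by field_simp
    simpa [softmax, Real.sigmoid_def, Real.exp_neg] using hcancel
  · simp [softmax, Real.sigmoid_def, add_comm]

lemma isMaxOn_sigmoid_div (a : ℝ) {τ : ℝ} (hτ : 0 < τ) :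
    IsMaxOn (fun p => p * a + τ * Real.binEntropy p) (Set.Icc 0 1) (Real.sigmoid (a / τ)) := by
  have hpair : (fun k => ![a, 0] k / τ) = ![a / τ, 0] := by
    ext k
    fin_cases k <;> simp
  intro p hp
  have hmem : ![p, 1 - p] ∈ stdSimplex ℝ (Fin 2) := by
    simp [stdSimplex, Fin.forall_fin_two, hp.1, hp.2]
  have hmax := isMaxOn_softmax_div ![a, 0] hτ hmem
  rw [hpair, softmax_pair_zero] at hmax
  simpa [Real.binEntropy_eq_negMulLog_add_negMulLog_one_sub] using hmax

end Entropy

section CenterMass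

variable {ι : Type*}

lemma sum_smul_sub_centerMass {R F : Type*} [Field R] [AddCommGroup F] [Module R F]
    {t : Finset ι} {w : ι → R} (hw : ∑ i ∈ t, w i ≠ 0) (v : ι → F) :
    ∑ i ∈ t, w i • (v i - t.centerMass w v) = 0 := by
  simp only [smul_sub, Finset.sum_sub_distrib, ← Finset.sum_smul, Finset.centerMass,
    smul_inv_smul₀ hw, sub_self]

variable {E : Type*} [SeminormedAddCommGroup E] [InnerProductSpace ℝ E]

lemma sum_mul_norm_sub_sq_eq_centerMass {t : Finset ι} {w : ι → ℝ} (hw : ∑ i ∈ t, w i ≠ 0)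
    (v : ι → E) (m : E) :
    ∑ i ∈ t, w i * ‖v i - m‖ ^ 2 =
      ∑ i ∈ t, w i * ‖v i - t.centerMass w v‖ ^ 2 +
        (∑ i ∈ t, w i) * ‖t.centerMass w v - m‖ ^ 2 := by
  set b := t.centerMass w v
  have hcross : ∑ i ∈ t, w i * inner ℝ (v i - b) (b - m) = 0 := by
    simp only [← real_inner_smul_left, ← sum_inner]
    rw [sum_smul_sub_centerMass hw, inner_zero_left]
  have hexpand (i : ι) : w i * ‖v i - m‖ ^ 2 = w i * ‖v i - b‖ ^ 2 +
      2 * (w i * inner ℝ (v i - b) (b - m)) + w i * ‖b - m‖ ^ 2 := by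
    rw [← sub_add_sub_cancel (v i) b m, norm_add_sq_real]
    ring
  simp only [hexpand, Finset.sum_add_distrib, ← Finset.mul_sum, ← Finset.sum_mul, hcross,
    mul_zero, add_zero]

lemma isMinOn_centerMass {t : Finset ι} {w : ι → ℝ} (hw : 0 < ∑ i ∈ t, w i) (v : ι → E) :
    IsMinOn (fun m => ∑ i ∈ t, w i * ‖v i - m‖ ^ 2) Set.univ (t.centerMass w v) := by
  intro m _
  simp only [Set.mem_ofPred_eq]
  rw [sum_mul_norm_sub_sq_eq_centerMass hw.ne' v m]
  exact le_add_of_nonneg_right (by positivity)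

end CenterMass

section Objective

lemma Hb_eq_binEntropy : Hb = Real.binEntropy := by
  ext p
  rw [Hb, Real.binEntropy_eq_negMulLog_add_negMulLog_one_sub, Real.negMulLog, Real.negMulLog]
  ring

lemma sigmoid_eq_real_sigmoid : sigmoid = Real.sigmoid := by
  ext x
  rw [sigmoid, Real.sigmoid_def, one_div]

lemma shannonH_eq_sum_negMulLog {K : ℕ} (z : Fin K → ℝ) :
    shannonH z = ∑ k, Real.negMulLog (z k) := by
  simp only [shannonH, Real.negMulLog, neg_mul, Finset.sum_neg_distrib]

variable {E : Type*} [NormedAddCommGroup E] [InnerProductSpace ℝ E]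
  {ι : Type*} {K : ℕ} {S Q : Finset ι} {v : ι → E} {lamxi lamz c : ℝ}
  {ξ ξ' : ι → ℝ} {z z' : ι → Fin K → ℝ} {μ μ' : Fin K → E}

lemma sum_mul_sum_mul_logp (t : Finset ι) :
    ∑ i ∈ t, ξ i * ∑ k, z i k * logp c (v i) k μ =
      ∑ k, (c * ∑ i ∈ t, ξ i * z i k -
        1 / 2 * ∑ i ∈ t, ξ i * z i k * ‖v i - μ k‖ ^ 2) := by
  simp only [Finset.mul_sum, ← Finset.sum_sub_distrib]
  rw [Finset.sum_comm]
  refine Finset.sum_congr rfl fun k _ => Finset.sum_congr rfl fun i _ => ?_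
  rw [logp]
  ring

variable [DecidableEq ι]

lemma osloL_eq_sum_sdiff_add_sum :
    osloL S Q v lamxi lamz c ξ z μ =
      ∑ i ∈ S \ Q, ξ i * ∑ k, z i k * logp c (v i) k μ +
        ∑ i ∈ Q, (ξ i * ∑ k, z i k * logp c (v i) k μ +
          (lamz * shannonH (z i) + lamxi * Hb (ξ i))) := by
  rw [osloL, ← Finset.sdiff_union_self_eq_union, Finset.sum_union Finset.sdiff_disjoint,
    add_assoc, ← Finset.sum_add_distrib]

lemma osloL_le_osloL_of_query_le (hξ : ∀ i ∈ S, ξ' i = ξ i) (hz : ∀ i ∈ S, z' i = z i)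
    (hQ : ∀ i ∈ Q,
      ξ i * ∑ k, z i k * logp c (v i) k μ + (lamz * shannonH (z i) + lamxi * Hb (ξ i)) ≤
        ξ' i * ∑ k, z' i k * logp c (v i) k μ +
          (lamz * shannonH (z' i) + lamxi * Hb (ξ' i))) :
    osloL S Q v lamxi lamz c ξ z μ ≤ osloL S Q v lamxi lamz c ξ' z' μ := by
  rw [osloL_eq_sum_sdiff_add_sum, osloL_eq_sum_sdiff_add_sum]
  refine add_le_add (Finset.sum_le_sum fun i hi => ?_) (Finset.sum_le_sum hQ)
  have hiS := (Finset.mem_sdiff.1 hi).1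
  rw [hξ i hiS, hz i hiS]

lemma osloL_le_of_sigmoid_update (hlxi : 0 < lamxi)
    (hξQ : ∀ i ∈ Q, ξ i ∈ Set.Icc (0 : ℝ) 1) (hξ'S : ∀ i ∈ S, ξ' i = ξ i)
    (hξ'Q : ∀ i ∈ Q, ξ' i = sigmoid ((1 / lamxi) * ∑ k, z i k * logp c (v i) k μ)) :
    osloL S Q v lamxi lamz c ξ z μ ≤ osloL S Q v lamxi lamz c ξ' z μ := by
  refine osloL_le_osloL_of_query_le hξ'S (fun _ _ => rfl) fun i hi => ?_
  have hmax := isMaxOn_sigmoid_div (∑ k, z i k * logp c (v i) k μ) hlxi (hξQ i hi)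
  rw [← one_div_mul_eq_div, ← sigmoid_eq_real_sigmoid, ← hξ'Q i hi, ← Hb_eq_binEntropy,
    Set.mem_ofPred_eq] at hmax
  linarith

lemma osloL_le_of_softmax_update (hlz : 0 < lamz)
    (hzQ : ∀ i ∈ Q, z i ∈ stdSimplex ℝ (Fin K)) (hz'S : ∀ i ∈ S, z' i = z i)
    (hz'Q : ∀ i ∈ Q, z' i = softmax fun k => ξ i / lamz * logp c (v i) k μ) :
    osloL S Q v lamxi lamz c ξ z μ ≤ osloL S Q v lamxi lamz c ξ z' μ := by
  refine osloL_le_osloL_of_query_le (fun _ _ => rfl) hz'S fun i hi => ?_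
  have hmax := isMaxOn_softmax_div (fun k => ξ i * logp c (v i) k μ) hlz (hzQ i hi)
  simp only [← div_mul_eq_mul_div, ← hz'Q i hi, ← shannonH_eq_sum_negMulLog, mul_left_comm _ (ξ i),
    ← Finset.mul_sum, Set.mem_ofPred_eq] at hmax
  linarith

lemma osloL_le_of_centerMass_update (hpos : ∀ k, 0 < ∑ i ∈ S ∪ Q, ξ i * z i k)
    (hμ' : ∀ k, μ' k = (S ∪ Q).centerMass (fun i => ξ i * z i k) v) :
    osloL S Q v lamxi lamz c ξ z μ ≤ osloL S Q v lamxi lamz c ξ z μ' := by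
  rw [osloL, osloL, sum_mul_sum_mul_logp, sum_mul_sum_mul_logp]
  gcongr ∑ k, (_ - 1 / 2 * ?_) + _ with k
  rw [hμ' k]
  exact isMinOn_centerMass (hpos k) v (Set.mem_univ (μ k))

lemma sum_union_mul_pos (hQ : Q.Nonempty) (hξS : ∀ i ∈ S, 0 ≤ ξ i) (hzS : ∀ i ∈ S, 0 ≤ z i)
    (hξQ : ∀ i ∈ Q, 0 < ξ i) (hzQ : ∀ i ∈ Q, ∀ k, 0 < z i k) (k : Fin K) :
    0 < ∑ i ∈ S ∪ Q, ξ i * z i k := by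
  obtain ⟨i, hi⟩ := hQ
  refine Finset.sum_pos' (fun j hj => ?_)
    ⟨i, Finset.mem_union_right S hi, mul_pos (hξQ i hi) (hzQ i hi k)⟩
  rcases Finset.mem_union.1 hj with hjS | hjQ
  · exact mul_nonneg (hξS j hjS) (hzS j hjS k)
  · exact (mul_pos (hξQ j hjQ) (hzQ j hjQ k)).le

theorem oslo_updates_monotone_general (hQ : Q.Nonempty) (hlxi : 0 < lamxi) (hlz : 0 < lamz)
    (hξS : ∀ i ∈ S, 0 ≤ ξ i) (hξQ : ∀ i ∈ Q, ξ i ∈ Set.Icc (0 : ℝ) 1)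
    (hzS : ∀ i ∈ S, 0 ≤ z i) (hzQ : ∀ i ∈ Q, z i ∈ stdSimplex ℝ (Fin K))
    (hξ'S : ∀ i ∈ S, ξ' i = ξ i)
    (hξ'Q : ∀ i ∈ Q, ξ' i = sigmoid ((1 / lamxi) * ∑ k, z i k * logp c (v i) k μ))
    (hz'S : ∀ i ∈ S, z' i = z i)
    (hz'Q : ∀ i ∈ Q, z' i = softmax fun k => ξ' i / lamz * logp c (v i) k μ)
    (hμ' : ∀ k, μ' k = (S ∪ Q).centerMass (fun i => ξ' i * z' i k) v) :
    osloL S Q v lamxi lamz c ξ z μ ≤ osloL S Q v lamxi lamz c ξ' z' μ' := by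
  have hpos : ∀ k, 0 < ∑ i ∈ S ∪ Q, ξ' i * z' i k :=
    sum_union_mul_pos hQ (fun i hi => (hξS i hi).trans_eq (hξ'S i hi).symm)
      (fun i hi => (hzS i hi).trans_eq (hz'S i hi).symm)
      (fun i hi => by rw [hξ'Q i hi, sigmoid_eq_real_sigmoid]; exact Real.sigmoid_pos _)
      (fun i hi k => by rw [hz'Q i hi]; exact softmax_pos _ k)
  calc osloL S Q v lamxi lamz c ξ z μ
      ≤ osloL S Q v lamxi lamz c ξ' z μ := osloL_le_of_sigmoid_update hlxi hξQ hξ'S hξ'Q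
    _ ≤ osloL S Q v lamxi lamz c ξ' z' μ := osloL_le_of_softmax_update hlz hzQ hz'S hz'Q
    _ ≤ osloL S Q v lamxi lamz c ξ' z' μ' := osloL_le_of_centerMass_update hpos hμ'

end Objective

/-- The block-coordinate updates of OSLO's Proposition 1, applied in sequence
(ξ-update, then z-update, then μ-update), never decrease the OSLO objective. -/
theorem oslo_updates_monotone
    {E : Type*} [NormedAddCommGroup E] [InnerProductSpace ℝ E]
    {ι : Type*} [DecidableEq ι] {K : ℕ} (hK : 1 ≤ K)
    (S Q : Finset ι) (hSQ : Disjoint S Q) (hQ : Q.Nonempty)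
    (v : ι → E) (y : ι → Fin K → ℝ) (hy : ∀ i ∈ S, ∃ k, y i = Pi.single k 1)
    (lamxi lamz c : ℝ) (hlxi : 0 < lamxi) (hlz : 0 < lamz)
    -- the current feasible iterate (ξ, z, μ)
    (ξ : ι → ℝ) (z : ι → Fin K → ℝ) (μ : Fin K → E)
    (hξS : ∀ i ∈ S, ξ i = 1) (hξQ : ∀ i ∈ Q, ξ i ∈ Set.Ioo (0 : ℝ) 1)
    (hzS : ∀ i ∈ S, z i = y i) (hzQ : ∀ i ∈ Q, z i ∈ stdSimplex ℝ (Fin K))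
    -- the ξ-update
    (ξ' : ι → ℝ) (hξ'S : ∀ i ∈ S, ξ' i = 1)
    (hξ'Q : ∀ i ∈ Q,
      ξ' i = sigmoid ((1 / lamxi) * ∑ k, z i k * logp c (v i) k μ))
    -- the z-update
    (z' : ι → Fin K → ℝ) (hz'S : ∀ i ∈ S, z' i = y i)
    (hz'Q : ∀ i ∈ Q, ∀ k,
      z' i k = Real.exp ((ξ' i / lamz) * logp c (v i) k μ) /
        ∑ j, Real.exp ((ξ' i / lamz) * logp c (v i) j μ))
    -- the μ-update
    (μ' : Fin K → E)
    (hμ' : ∀ k, μ' k =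
      (∑ i ∈ S ∪ Q, ξ' i * z' i k)⁻¹ • ∑ i ∈ S ∪ Q, (ξ' i * z' i k) • v i) :
    osloL S Q v lamxi lamz c ξ z μ ≤ osloL S Q v lamxi lamz c ξ' z' μ' := by
  have hy_nonneg (i : ι) (hi : i ∈ S) : 0 ≤ y i := by
    obtain ⟨k, hk⟩ := hy i hi
    exact hk ▸ Pi.single_nonneg.2 zero_le_one
  exact oslo_updates_monotone_general hQ hlxi hlz
    (fun i hi => zero_le_one.trans_eq (hξS i hi).symm)
    (fun i hi => Set.Ioo_subset_Icc_self (hξQ i hi))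
    (fun i hi => (hy_nonneg i hi).trans_eq (hzS i hi).symm) hzQ
    (fun i hi => (hξ'S i hi).trans (hξS i hi).symm) hξ'Q
    (fun i hi => (hz'S i hi).trans (hzS i hi).symm) (fun i hi => funext (hz'Q i hi)) hμ'
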